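/- arXiv:1311.5324 — 2 statements merged into one kernel-verified Lean document; each statement's English description precedes it below -/
import Mathlib

section
/- Let Λ = (λ_i) be a nondecreasing sequence of positive real numbers with ∑ 1/λ_i = +∞, let p ∈ [1,∞), let q = (q(n)) be an increasing sequence of positive reals, and let δ = (δ(n)) be an increasing unbounded sequence of positive reals. Then for every function f : [0,1] → ℝ of bounded p-Λ-variation, V(f,q;δ) ≤ V_{ΛBV^p}(f) · sup_{n≥1} max_{1 ≤ k ≤ δ(n)} ( k / (∑_{i=1}^{k} 1/λ_i)^{q(n)/p} )^{1/q(n)}. In particular, if sup_{n≥1} max_{1 ≤ k ≤ δ(n)} k^{1/q(n)} / (∑_{i=1}^{k} 1/λ_i)^{1/p} is finite, then ΛBV^(p) ⊆ BV(q;δ). -/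
open scoped ENNReal
open Filter

/-- A finite family of nonoverlapping subintervals of `[0,1]`, each given as its pair of
endpoints: every interval is nondegenerate, contained in `[0,1]`, and any two of them
have disjoint interiors. -/
def Nonoverlapping (n : ℕ) (I : Fin n → ℝ × ℝ) : Prop :=
  (∀ i, 0 ≤ (I i).1 ∧ (I i).1 < (I i).2 ∧ (I i).2 ≤ 1) ∧
    ∀ i j, i ≠ j → (I i).2 ≤ (I j).1 ∨ (I j).2 ≤ (I i).1

/-- The `p`-`Λ`-variation `V_{ΛBV^p}(f)` of `f : [0,1] → ℝ`, as a value in `ℝ≥0∞`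
(`Lam i` plays the role of `λ_{i+1}`). -/
noncomputable def pLamVar (Lam : ℕ → ℝ) (p : ℝ) (f : ℝ → ℝ) : ℝ≥0∞ :=
  ⨆ (n : ℕ) (I : Fin n → ℝ × ℝ) (_ : Nonoverlapping n I),
    ENNReal.ofReal ((∑ i, |f (I i).2 - f (I i).1| ^ p / Lam i) ^ (1 / p))

/-- The generalized Wiener variation `V(f, q; δ)`, as a value in `ℝ≥0∞`. -/
noncomputable def wienerVar (q δ : ℕ → ℝ) (f : ℝ → ℝ) : ℝ≥0∞ :=
  ⨆ (n : ℕ) (s : ℕ) (I : Fin s → ℝ × ℝ) (_ : Nonoverlapping s I)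
    (_ : ∀ k, 1 / δ n ≤ (I k).2 - (I k).1),
    ENNReal.ofReal ((∑ k, |f (I k).2 - f (I k).1| ^ q n) ^ (1 / q n))

/-!
Only the increments `a_i = |f(I_i)|` of one admissible family matter, so the theorem reduces to a
comparison of `(∑ a_i^q)^(1/q)` with the weighted sum `(∑ a_i^p / λ_i)^(1/p)`. The latter may be
taken after any rearrangement of the intervals, because `V_{ΛBV^p}` is a supremum over all
orderings. Put `x = a^p`, `r = q / p` and `w_i = 1 / λ_i`.

* If `r ≥ 1`, arrange `x` in decreasing order. Then `x` is a nonnegative combination of the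
  indicators of the initial segments `{1, …, k}`, so by Minkowski's inequality it suffices to
  compare the two sides on these indicators, where they are `k^(1/r)` and `w_1 + ⋯ + w_k`.
* If `r ≤ 1`, arrange `x` in the order of `w`. The power mean inequality followed by Chebyshev's sum
  inequality gives the bound, and only `k = n` is involved.

Intervals of length at least `1 / δ(n)` that do not overlap are at most `δ(n)` in number, which is
the range of `k` in the supremum.
-/

section RearrangedWeightedSums

lemma rpow_sum_le_rpow_sum_sub_last_add {r : ℝ} (hr : 1 ≤ r) {n : ℕ} {x : Fin (n + 1) → ℝ}
    (hlast : 0 ≤ x (Fin.last n)) (hx : ∀ i, x (Fin.last n) ≤ x i) :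
    (∑ i, x i ^ r) ^ (1 / r) ≤
      (∑ i : Fin n, (x i.castSucc - x (Fin.last n)) ^ r) ^ (1 / r) +
        x (Fin.last n) * ((n + 1 : ℕ) : ℝ) ^ (1 / r) := by
  have hr0 : r ≠ 0 := by positivity
  have minkowski := Real.Lp_add_le_of_nonneg (s := Finset.univ) hr
    (fun i _ ↦ sub_nonneg.2 (hx i)) (fun _ _ ↦ hlast)
  have hconst : (∑ _i : Fin (n + 1), x (Fin.last n) ^ r) ^ (1 / r) =
      x (Fin.last n) * ((n + 1 : ℕ) : ℝ) ^ (1 / r) := by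
    rw [Finset.sum_const, Finset.card_univ, Fintype.card_fin, nsmul_eq_mul,
      Real.mul_rpow (by positivity) (by positivity), one_div, Real.rpow_rpow_inv hlast hr0,
      mul_comm]
  simpa only [sub_add_cancel, hconst, Fin.sum_univ_castSucc (fun i ↦ (x i - x (Fin.last n)) ^ r),
    sub_self, Real.zero_rpow hr0, add_zero] using minkowski

lemma sum_mul_eq_sum_sub_last_mul_add (w : ℕ → ℝ) {n : ℕ} (x : Fin (n + 1) → ℝ) :
    ∑ i, x i * w i = ∑ i : Fin n, (x i.castSucc - x (Fin.last n)) * w i +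
      x (Fin.last n) * ∑ i ∈ Finset.range (n + 1), w i := by
  rw [Fin.sum_univ_castSucc, Finset.sum_range_succ, ← Fin.sum_univ_eq_sum_range]
  simp only [sub_mul, Finset.sum_sub_distrib, ← Finset.mul_sum, Fin.val_castSucc, Fin.val_last]
  ring

lemma rpow_sum_le_of_antitone {w : ℕ → ℝ} {r C : ℝ} (hr : 1 ≤ r) {n : ℕ}
    (hC : ∀ k ∈ Finset.Icc 1 n, (k : ℝ) ^ (1 / r) ≤ C * ∑ i ∈ Finset.range k, w i)
    {x : Fin n → ℝ} (hx : ∀ i, 0 ≤ x i) (hanti : Antitone x) :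
    (∑ i, x i ^ r) ^ (1 / r) ≤ C * ∑ i, x i * w i := by
  induction n with
  | zero => simp [Real.zero_rpow (inv_ne_zero (by positivity : r ≠ 0))]
  | succ n ih =>
    have hlast : ∀ i, x (Fin.last n) ≤ x i := fun i ↦ hanti (Fin.le_last i)
    have hinit := ih (fun k hk ↦ hC k (Finset.Icc_subset_Icc_right n.le_succ hk))
      (fun i : Fin n ↦ sub_nonneg.2 (hlast i.castSucc))
      (fun i j hij ↦ sub_le_sub_right (hanti (Fin.castSucc_le_castSucc_iff.2 hij)) _)
    have hfull := hC (n + 1) (by simp)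
    calc (∑ i, x i ^ r) ^ (1 / r)
        ≤ (∑ i : Fin n, (x i.castSucc - x (Fin.last n)) ^ r) ^ (1 / r) +
            x (Fin.last n) * ((n + 1 : ℕ) : ℝ) ^ (1 / r) :=
          rpow_sum_le_rpow_sum_sub_last_add hr (hx _) hlast
      _ ≤ C * ∑ i : Fin n, (x i.castSucc - x (Fin.last n)) * w i +
            x (Fin.last n) * (C * ∑ i ∈ Finset.range (n + 1), w i) :=
          add_le_add hinit (mul_le_mul_of_nonneg_left hfull (hx _))
      _ = C * ∑ i, x i * w i := by
          rw [sum_mul_eq_sum_sub_last_mul_add]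
          ring

lemma rpow_sum_le_of_monovary {ι : Type*} [Fintype ι] {x w : ι → ℝ} {r C : ℝ} (hr : 0 < r)
    (hr1 : r ≤ 1) (hC0 : 0 ≤ C) (hC : (Fintype.card ι : ℝ) ^ (1 / r) ≤ C * ∑ i, w i)
    (hx : ∀ i, 0 ≤ x i) (hxw : Monovary x w) :
    (∑ i, x i ^ r) ^ (1 / r) ≤ C * ∑ i, x i * w i := by
  cases isEmpty_or_nonempty ι
  · simp [Real.zero_rpow (inv_ne_zero hr.ne')]
  have hcard : (0 : ℝ) < Fintype.card ι := by exact_mod_cast Fintype.card_pos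
  have powerMean : (∑ i, x i ^ r) ^ (1 / r) ≤
      (Fintype.card ι : ℝ) ^ (1 / r - 1) * ∑ i, x i := by
    have := Real.rpow_sum_le_const_mul_sum_rpow_of_nonneg (s := Finset.univ)
      ((one_le_div hr).2 hr1) (fun i _ ↦ Real.rpow_nonneg (hx i) r)
    simpa only [one_div, Real.rpow_rpow_inv (hx _) hr.ne', Finset.card_univ] using this
  calc (∑ i, x i ^ r) ^ (1 / r)
      ≤ (Fintype.card ι : ℝ) ^ (1 / r) * (∑ i, x i) / Fintype.card ι := by
        rwa [Real.rpow_sub_one hcard.ne', div_mul_eq_mul_div] at powerMean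
    _ ≤ C * (∑ i, w i) * (∑ i, x i) / Fintype.card ι := by
        have := Finset.sum_nonneg fun i (_ : i ∈ Finset.univ) ↦ hx i
        gcongr
    _ = C * ((∑ i, x i) * ∑ i, w i) / Fintype.card ι := by ring
    _ ≤ C * (Fintype.card ι * ∑ i, x i * w i) / Fintype.card ι :=
        div_le_div_of_nonneg_right
          (mul_le_mul_of_nonneg_left hxw.sum_mul_sum_le_card_mul_sum hC0) hcard.le
    _ = C * ∑ i, x i * w i := by field_simp

lemma exists_perm_monovary {α β : Type*} [LinearOrder α] [LinearOrder β] {n : ℕ}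
    (x : Fin n → α) (w : Fin n → β) : ∃ σ : Equiv.Perm (Fin n), Monovary (x ∘ σ) w := by
  have hsort := (Tuple.monotone_sort x).monovary (Tuple.monotone_sort w)
  refine ⟨(Tuple.sort w).symm.trans (Tuple.sort x), ?_⟩
  simpa [Function.comp_def] using hsort.comp_right (Tuple.sort w).symm

lemma exists_perm_rpow_sum_le {w : ℕ → ℝ} {r C : ℝ} (hr : 0 < r) (hC0 : 0 ≤ C) {n : ℕ}
    (hC : ∀ k ∈ Finset.Icc 1 n, (k : ℝ) ^ (1 / r) ≤ C * ∑ i ∈ Finset.range k, w i)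
    {x : Fin n → ℝ} (hx : ∀ i, 0 ≤ x i) :
    ∃ σ : Equiv.Perm (Fin n), (∑ i, x i ^ r) ^ (1 / r) ≤ C * ∑ i, x (σ i) * w i := by
  suffices ∃ σ : Equiv.Perm (Fin n),
      (∑ i, x (σ i) ^ r) ^ (1 / r) ≤ C * ∑ i, x (σ i) * w i by
    obtain ⟨σ, hσ⟩ := this
    exact ⟨σ, by rwa [Equiv.sum_comp σ fun i ↦ x i ^ r] at hσ⟩
  rcases le_total 1 r with hr1 | hr1
  · obtain ⟨σ, hσ⟩ : ∃ σ : Equiv.Perm (Fin n), Antitone (x ∘ σ) :=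
      ⟨_, Tuple.monotone_sort (OrderDual.toDual ∘ x)⟩
    exact ⟨σ, rpow_sum_le_of_antitone hr1 hC (fun i ↦ hx (σ i)) hσ⟩
  · obtain ⟨σ, hσ⟩ := exists_perm_monovary x fun i ↦ w i
    have hcard : (Fintype.card (Fin n) : ℝ) ^ (1 / r) ≤ C * ∑ i : Fin n, w i := by
      rw [Fintype.card_fin, Fin.sum_univ_eq_sum_range]
      rcases n.eq_zero_or_pos with rfl | hn
      · simp [Real.zero_rpow (inv_ne_zero hr.ne')]
      · exact hC n (Finset.right_mem_Icc.2 hn)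
    exact ⟨σ, rpow_sum_le_of_monovary hr hr1 hC0 hcard (fun i ↦ hx (σ i)) hσ⟩

lemma exists_perm_rpow_sum_le_mul_rpow_sum {w : ℕ → ℝ} (hw : ∀ i, 0 < w i) {p q C : ℝ}
    (hp : 0 < p) (hq : 0 < q) (hC0 : 0 ≤ C) {n : ℕ}
    (hC : ∀ k ∈ Finset.Icc 1 n,
      (k : ℝ) ^ (1 / q) / (∑ i ∈ Finset.range k, w i) ^ (1 / p) ≤ C)
    {a : Fin n → ℝ} (ha : ∀ i, 0 ≤ a i) :
    ∃ σ : Equiv.Perm (Fin n),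
      (∑ i, a i ^ q) ^ (1 / q) ≤ (∑ i, a (σ i) ^ p * w i) ^ (1 / p) * C := by
  have hCp : ∀ k ∈ Finset.Icc 1 n,
      (k : ℝ) ^ (1 / (q / p)) ≤ C ^ p * ∑ i ∈ Finset.range k, w i := by
    intro k hk
    have hW : 0 < ∑ i ∈ Finset.range k, w i := Finset.sum_pos (fun i _ ↦ hw i)
      (Finset.nonempty_range_iff.2 (Nat.one_le_iff_ne_zero.1 (Finset.mem_Icc.1 hk).1))
    have hpow := Real.rpow_le_rpow (by positivity)
      ((div_le_iff₀ (Real.rpow_pos_of_pos hW _)).1 (hC k hk)) hp.le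
    rwa [Real.mul_rpow hC0 (by positivity), one_div p, Real.rpow_inv_rpow hW.le hp.ne',
      ← Real.rpow_mul k.cast_nonneg, show 1 / q * p = 1 / (q / p) by field_simp] at hpow
  obtain ⟨σ, hσ⟩ := exists_perm_rpow_sum_le (div_pos hq hp) (by positivity) hCp
    (fun i ↦ Real.rpow_nonneg (ha i) p)
  refine ⟨σ, ?_⟩
  have hsum : 0 ≤ ∑ i, a i ^ q := Finset.sum_nonneg fun i _ ↦ Real.rpow_nonneg (ha i) q
  have hsumw : 0 ≤ ∑ i, a (σ i) ^ p * w i :=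
    Finset.sum_nonneg fun i _ ↦ mul_nonneg (Real.rpow_nonneg (ha _) p) (hw i).le
  simp only [← Real.rpow_mul (ha _), mul_div_cancel₀ q hp.ne'] at hσ
  have hroot := Real.rpow_le_rpow (by positivity) hσ (one_div_pos.2 hp).le
  rwa [← Real.rpow_mul hsum, show 1 / (q / p) * (1 / p) = 1 / q by field_simp,
    Real.mul_rpow (by positivity) hsumw, one_div p, Real.rpow_rpow_inv hC0 hp.ne',
    ← one_div, mul_comm] at hroot

end RearrangedWeightedSums

namespace Nonoverlapping

variable {n : ℕ} {I : Fin n → ℝ × ℝ}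

lemma comp_injective (hI : Nonoverlapping n I) {m : ℕ} {e : Fin m → Fin n}
    (he : Function.Injective e) : Nonoverlapping m (I ∘ e) :=
  ⟨fun i ↦ hI.1 (e i), fun _ _ hij ↦ hI.2 _ _ (he.ne hij)⟩

lemma pairwise_disjoint_Ioo (hI : Nonoverlapping n I) :
    Pairwise (Function.onFun Disjoint fun k ↦ Set.Ioo (I k).1 (I k).2) := by
  intro i j hij
  refine Set.disjoint_left.2 fun x hxi hxj ↦ ?_
  rcases hI.2 i j hij with h | h
  · exact (hxi.2.trans_le h).not_gt hxj.1
  · exact (hxj.2.trans_le h).not_gt hxi.1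

lemma sum_length_le_one (hI : Nonoverlapping n I) : ∑ k, ((I k).2 - (I k).1) ≤ 1 := by
  have hsub : ⋃ k, Set.Ioo (I k).1 (I k).2 ⊆ Set.Icc 0 1 := Set.iUnion_subset fun k ↦
    Set.Ioo_subset_Icc_self.trans (Set.Icc_subset_Icc (hI.1 k).1 (hI.1 k).2.2)
  have hvol := MeasureTheory.measure_mono (μ := MeasureTheory.volume) hsub
  rw [MeasureTheory.measure_iUnion hI.pairwise_disjoint_Ioo (fun _ ↦ measurableSet_Ioo),
    tsum_fintype] at hvol
  simp only [Real.volume_Ioo, Real.volume_Icc] at hvol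
  rw [← ENNReal.ofReal_sum_of_nonneg fun k _ ↦ sub_nonneg.2 (hI.1 k).2.1.le] at hvol
  simpa using hvol

lemma natCast_le_of_one_div_le_length (hI : Nonoverlapping n I) {d : ℝ} (hd : 0 < d)
    (hlen : ∀ k, 1 / d ≤ (I k).2 - (I k).1) : (n : ℝ) ≤ d := by
  have hsum : (n : ℝ) * (1 / d) ≤ 1 := calc
    (n : ℝ) * (1 / d) = ∑ _k : Fin n, 1 / d := by simp
    _ ≤ ∑ k, ((I k).2 - (I k).1) := Finset.sum_le_sum fun k _ ↦ hlen k
    _ ≤ 1 := hI.sum_length_le_one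
  rwa [mul_one_div, div_le_one hd] at hsum

lemma ofReal_rpow_sum_le_pLamVar (hI : Nonoverlapping n I) (Lam : ℕ → ℝ) (p : ℝ) (f : ℝ → ℝ) :
    ENNReal.ofReal ((∑ i, |f (I i).2 - f (I i).1| ^ p / Lam i) ^ (1 / p)) ≤ pLamVar Lam p f :=
  le_iSup_of_le n (le_iSup₂_of_le I hI le_rfl)

lemma exists_ofReal_rpow_sum_le_pLamVar_mul (hI : Nonoverlapping n I) (hn : 1 ≤ n) {Lam : ℕ → ℝ}
    (hLam : ∀ i, 0 < Lam i) {p q : ℝ} (hp : 0 < p) (hq : 0 < q) (f : ℝ → ℝ) :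
    ∃ k ∈ Finset.Icc 1 n,
      ENNReal.ofReal ((∑ i, |f (I i).2 - f (I i).1| ^ q) ^ (1 / q)) ≤
        pLamVar Lam p f * ENNReal.ofReal
          ((k : ℝ) ^ (1 / q) / (∑ i ∈ Finset.range k, 1 / Lam i) ^ (1 / p)) := by
  have hw : ∀ i, 0 < 1 / Lam i := fun i ↦ one_div_pos.2 (hLam i)
  obtain ⟨k, hk, hmax⟩ := Finset.exists_max_image (Finset.Icc 1 n)
    (fun k ↦ (k : ℝ) ^ (1 / q) / (∑ i ∈ Finset.range k, 1 / Lam i) ^ (1 / p))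
    (Finset.nonempty_Icc.2 hn)
  have hC0 : 0 ≤ (k : ℝ) ^ (1 / q) / (∑ i ∈ Finset.range k, 1 / Lam i) ^ (1 / p) := by
    have := Finset.sum_nonneg fun i (_ : i ∈ Finset.range k) ↦ (hw i).le
    positivity
  obtain ⟨σ, hσ⟩ := exists_perm_rpow_sum_le_mul_rpow_sum hw hp hq hC0 hmax
    (fun i ↦ abs_nonneg (f (I i).2 - f (I i).1))
  simp only [mul_one_div] at hσ
  refine ⟨k, hk, (ENNReal.ofReal_le_ofReal hσ).trans ?_⟩
  rw [ENNReal.ofReal_mul' hC0]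
  gcongr
  exact (hI.comp_injective σ.injective).ofReal_rpow_sum_le_pLamVar Lam p f

end Nonoverlapping

lemma wienerVar_le_pLamVar_mul_iSup {Lam q δ : ℕ → ℝ} {p : ℝ} (hLam : ∀ i, 0 < Lam i)
    (hp : 0 < p) (hq : ∀ n, 0 < q n) (hδ : ∀ n, 0 < δ n) (f : ℝ → ℝ) :
    wienerVar q δ f ≤ pLamVar Lam p f *
      ⨆ (n : ℕ) (k : ℕ) (_ : 1 ≤ k) (_ : (k : ℝ) ≤ δ n),
        ENNReal.ofReal ((k : ℝ) ^ (1 / q n) /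
          (∑ i ∈ Finset.range k, 1 / Lam i) ^ (1 / p)) := by
  refine iSup₂_le fun n s ↦ iSup₂_le fun I hI ↦ iSup_le fun hlen ↦ ?_
  rcases s.eq_zero_or_pos with rfl | hs
  · simp [Real.zero_rpow (inv_ne_zero (hq n).ne')]
  obtain ⟨k, hk, hle⟩ := hI.exists_ofReal_rpow_sum_le_pLamVar_mul hs hLam hp (hq n) f
  rw [Finset.mem_Icc] at hk
  have hkδ : (k : ℝ) ≤ δ n :=
    (Nat.cast_le.2 hk.2).trans (hI.natCast_le_of_one_div_le_length (hδ n) hlen)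
  refine hle.trans ?_
  gcongr
  exact le_iSup₂_of_le n k (le_iSup₂_of_le hk.1 hkδ le_rfl)

lemma div_rpow_div_rpow_one_div {k S p q : ℝ} (hk : 0 ≤ k) (hS : 0 ≤ S) (hq : q ≠ 0) :
    (k / S ^ (q / p)) ^ (1 / q) = k ^ (1 / q) / S ^ (1 / p) := by
  rw [Real.div_rpow hk (by positivity), ← Real.rpow_mul hS, div_mul_div_comm, mul_one, mul_comm p,
    ← div_div, div_self hq]

theorem variation_bound_general {Lam q δ : ℕ → ℝ} {p : ℝ} (hLam : ∀ i, 0 < Lam i)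
    (hp : 0 < p) (hq : ∀ n, 0 < q n) (hδ : ∀ n, 0 < δ n) :
    (∀ f : ℝ → ℝ,
      wienerVar q δ f ≤ pLamVar Lam p f *
        ⨆ (n : ℕ) (k : ℕ) (_ : 1 ≤ k) (_ : (k : ℝ) ≤ δ n),
          ENNReal.ofReal (((k : ℝ) /
            (∑ i ∈ Finset.range k, 1 / Lam i) ^ (q n / p)) ^ (1 / q n))) ∧
    ((⨆ (n : ℕ) (k : ℕ) (_ : 1 ≤ k) (_ : (k : ℝ) ≤ δ n),
        ENNReal.ofReal ((k : ℝ) ^ (1 / q n) /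
          (∑ i ∈ Finset.range k, 1 / Lam i) ^ (1 / p))) < ⊤ →
      ∀ f : ℝ → ℝ, pLamVar Lam p f < ⊤ → wienerVar q δ f < ⊤) := by
  have hbound := wienerVar_le_pLamVar_mul_iSup hLam hp hq hδ
  have hconst (n k : ℕ) : ((k : ℝ) / (∑ i ∈ Finset.range k, 1 / Lam i) ^ (q n / p)) ^ (1 / q n) =
      (k : ℝ) ^ (1 / q n) / (∑ i ∈ Finset.range k, 1 / Lam i) ^ (1 / p) :=
    div_rpow_div_rpow_one_div k.cast_nonneg
      (Finset.sum_nonneg fun i _ ↦ (one_div_pos.2 (hLam i)).le) (hq n).ne'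
  simp only [hconst]
  exact ⟨hbound, fun hfin f hf ↦ (hbound f).trans_lt (ENNReal.mul_lt_top hf hfin)⟩

/-- **Sufficiency, quantitative form.** For every `f` of bounded `p`-`Λ`-variation,
`V(f,q;δ) ≤ V_{ΛBV^p}(f) · sup_{n} max_{1 ≤ k ≤ δ(n)} (k / (∑_{i=1}^k 1/λ_i)^{q(n)/p})^{1/q(n)}`.
In particular, if `sup_{n} max_{1 ≤ k ≤ δ(n)} k^{1/q(n)} / (∑_{i=1}^k 1/λ_i)^{1/p}` is finite,
then `ΛBV^(p) ⊆ BV(q;δ)`. -/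
theorem variation_bound
    (Lam q δ : ℕ → ℝ) (p : ℝ)
    (hLpos : ∀ i, 0 < Lam i) (hLmono : Monotone Lam)
    (hLdiv : Tendsto (fun n => ∑ i ∈ Finset.range n, 1 / Lam i) atTop atTop)
    (hp : 1 ≤ p)
    (hqpos : ∀ n, 0 < q n) (hq : StrictMono q)
    (hδpos : ∀ n, 0 < δ n) (hδ : StrictMono δ)
    (hδunbdd : Tendsto δ atTop atTop) :
    (∀ f : ℝ → ℝ, pLamVar Lam p f < ⊤ →
      wienerVar q δ f ≤ pLamVar Lam p f *
        ⨆ (n : ℕ) (k : ℕ) (_ : 1 ≤ k) (_ : (k : ℝ) ≤ δ n),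
          ENNReal.ofReal (((k : ℝ) /
            (∑ i ∈ Finset.range k, 1 / Lam i) ^ (q n / p)) ^ (1 / q n))) ∧
    ((⨆ (n : ℕ) (k : ℕ) (_ : 1 ≤ k) (_ : (k : ℝ) ≤ δ n),
        ENNReal.ofReal ((k : ℝ) ^ (1 / q n) /
          (∑ i ∈ Finset.range k, 1 / Lam i) ^ (1 / p))) < ⊤ →
      ∀ f : ℝ → ℝ, pLamVar Lam p f < ⊤ → wienerVar q δ f < ⊤) := by
  have general := variation_bound_general hLpos (zero_lt_one.trans_le hp) hqpos hδpos
  exact ⟨fun f _ ↦ general.1 f, general.2⟩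
end

section
/- Let Λ = (λ_i) be a nondecreasing sequence of positive real numbers with ∑ 1/λ_i = +∞, let p ∈ [1,∞), let q = (q(n)) be an increasing sequence of positive reals, and let δ = (δ(n)) be an increasing unbounded sequence of positive reals. If limsup_{n→∞} max_{1 ≤ k ≤ δ(n)} k^{1/q(n)} / (∑_{i=1}^{k} 1/λ_i)^{1/p} = +∞, then there exists a function g : [0,1] → ℝ of bounded p-Λ-variation such that g does not belong to BV(q;δ); that is, the inclusion ΛBV^(p) ⊆ BV(q;δ) fails. -/
open scoped ENNReal
open Filter

/-!
Since `q` is bounded below by a positive constant, the unboundedness of the quotients forces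
arbitrarily large `k` with `k ≤ δ n` and `k ^ (1 / q n) / (∑_{i<k} 1 / λ_i) ^ (1 / p)` as large as
we please. Choose such `k_j` and `n_j` with quotient at least `8 ^ j` and `3 k_j ≤ k_{j+1}`, and let
`g = ∑_j 4⁻ʲ a_j u_j`, where `u_j` alternates `k_j` times between `0` and `1` along the grid of mesh
`1 / δ (n_j)` and `a_j = (∑_{i<k_j} 1 / λ_i) ^ (-1 / p)`.

At most `k_j` nonoverlapping intervals see a change of `u_j`, so `a_j u_j` has `p`-`Λ`-variation at
most `1` and `g` has finite `p`-`Λ`-variation. On the `j`-th grid, the waves of index `l < j` are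
constant on at least half of the `k_j` cells, since `2 ∑_{l<j} k_l ≤ k_j`; there the `j`-th term
dominates the later ones, so the `q (n_j)`-variation of `g` on this grid is at least a constant
times `4⁻ʲ a_j k_j ^ (1 / q (n_j)) ≥ 2 ^ j`.
-/

open Finset (range)

variable {Lam q δ : ℕ → ℝ} {p : ℝ}

/-! ### Partial sums of reciprocals -/

/-- The partial sum `∑ 1 / λ_i` over the first `k` indices, the weight which a function with `k`
jumps of size one carries in `ΛBV^(p)`. -/
noncomputable def recipSum (Lam : ℕ → ℝ) (k : ℕ) : ℝ :=
  ∑ i ∈ range k, 1 / Lam i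

theorem recipSum_pos (hL : ∀ i, 0 < Lam i) {k : ℕ} (hk : 1 ≤ k) : 0 < recipSum Lam k :=
  Finset.sum_pos (fun i _ => one_div_pos.2 (hL i)) ⟨0, Finset.mem_range.2 hk⟩

theorem recipSum_mono (hL : ∀ i, 0 < Lam i) : Monotone (recipSum Lam) := fun _ _ h =>
  Finset.sum_le_sum_of_subset_of_nonneg (Finset.range_mono h)
    fun i _ _ => (one_div_pos.2 (hL i)).le

theorem sum_le_sum_range_card {M : Type*} [AddCommMonoid M] [PartialOrder M]
    [IsOrderedAddMonoid M] {w : ℕ → M} (hw : Antitone w) (T : Finset ℕ) :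
    ∑ i ∈ T, w i ≤ ∑ i ∈ range T.card, w i := by
  induction T using Finset.induction_on_max with
  | empty => simp
  | insert a s h ih =>
    have ha : a ∉ s := fun has => lt_irrefl _ (h a has)
    have hcard : s.card ≤ a := by
      simpa using Finset.card_le_card fun x hx => Finset.mem_range.2 (h x hx)
    rw [Finset.sum_insert ha, Finset.card_insert_of_notMem ha, Finset.sum_range_succ, add_comm]
    exact add_le_add ih (hw hcard)

theorem sum_one_div_le_recipSum (hL : ∀ i, 0 < Lam i) (hmono : Monotone Lam) {n k : ℕ}
    {T : Finset (Fin n)} (hT : T.card ≤ k) : ∑ i ∈ T, 1 / Lam i ≤ recipSum Lam k := by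
  have hanti : Antitone fun i => 1 / Lam i := fun i _ hij =>
    one_div_le_one_div_of_le (hL i) (hmono hij)
  calc ∑ i ∈ T, 1 / Lam i = ∑ i ∈ T.map Fin.valEmbedding, 1 / Lam i := by simp
    _ ≤ recipSum Lam T.card := by
      simpa only [recipSum, Finset.card_map] using
        sum_le_sum_range_card hanti (T.map Fin.valEmbedding)
    _ ≤ recipSum Lam k := recipSum_mono hL hT

theorem rpow_div_recipSum_rpow_le (hL : ∀ i, 0 < Lam i) (hp : 0 < p) {c r : ℝ} (hc : 0 < c)
    (hcr : c ≤ r) {k K : ℕ} (hk : 1 ≤ k) (hkK : k ≤ K) :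
    (k : ℝ) ^ (1 / r) / recipSum Lam k ^ (1 / p) ≤
      (K : ℝ) ^ (1 / c) / recipSum Lam 1 ^ (1 / p) := by
  have hS : 0 < recipSum Lam 1 := recipSum_pos hL le_rfl
  have hmono : recipSum Lam 1 ≤ recipSum Lam k := recipSum_mono hL hk
  have hpow : (k : ℝ) ^ (1 / r) ≤ (K : ℝ) ^ (1 / c) :=
    calc (k : ℝ) ^ (1 / r) ≤ (k : ℝ) ^ (1 / c) :=
          Real.rpow_le_rpow_of_exponent_le (Nat.one_le_cast.2 hk) (one_div_le_one_div_of_le hc hcr)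
      _ ≤ (K : ℝ) ^ (1 / c) := by gcongr
  gcongr

/-! ### Selecting the block lengths -/

theorem exists_lt_of_limsup_eq_top
    (h : limsup (fun n => ⨆ (k : ℕ) (_ : 1 ≤ k) (_ : (k : ℝ) ≤ δ n),
      ENNReal.ofReal ((k : ℝ) ^ (1 / q n) / recipSum Lam k ^ (1 / p))) atTop = ⊤) (M : ℝ) :
    ∃ n k : ℕ, 1 ≤ k ∧ (k : ℝ) ≤ δ n ∧ M < (k : ℝ) ^ (1 / q n) / recipSum Lam k ^ (1 / p) := by
  by_contra! hM
  refine (ENNReal.ofReal_lt_top (r := M)).not_ge (h ▸ limsup_le_of_le (h := ?_))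
  exact .of_forall fun n => iSup_le fun k => iSup_le fun hk => iSup_le fun hkδ =>
    ENNReal.ofReal_le_ofReal (hM n k hk hkδ)

theorem frequently_exists_le_of_limsup_eq_top (hL : ∀ i, 0 < Lam i) (hp : 0 < p) {c : ℝ}
    (hc : 0 < c) (hq : ∀ n, c ≤ q n)
    (h : limsup (fun n => ⨆ (k : ℕ) (_ : 1 ≤ k) (_ : (k : ℝ) ≤ δ n),
      ENNReal.ofReal ((k : ℝ) ^ (1 / q n) / recipSum Lam k ^ (1 / p))) atTop = ⊤) (M : ℝ) :
    ∃ᶠ k : ℕ in atTop, 1 ≤ k ∧ ∃ n, (k : ℝ) ≤ δ n ∧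
      M ≤ (k : ℝ) ^ (1 / q n) / recipSum Lam k ^ (1 / p) := by
  refine frequently_atTop.2 fun K => ?_
  obtain ⟨n, k, hk, hkδ, hlt⟩ :=
    exists_lt_of_limsup_eq_top h (max M ((K : ℝ) ^ (1 / c) / recipSum Lam 1 ^ (1 / p)))
  obtain ⟨hM, hK⟩ := max_lt_iff.1 hlt
  have hKk : K < k := by
    by_contra! hkK
    exact hK.not_ge (rpow_div_recipSum_rpow_le hL hp hc (hq n) hk hkK)
  exact ⟨k, hKk.le, hk, n, hkδ, hM.le⟩

theorem exists_seq_of_frequently {P : ℕ → ℕ → Prop} (hP : ∀ j, ∃ᶠ k in atTop, P j k)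
    (G : ℕ → ℕ) : ∃ k : ℕ → ℕ, (∀ j, P j (k j)) ∧ ∀ j, G (k j) ≤ k (j + 1) := by
  choose F hF hPF using fun j => frequently_atTop.1 (hP j)
  let k : ℕ → ℕ := fun j => Nat.rec (F 0 0) (fun j m => F (j + 1) (G m)) j
  refine ⟨k, fun j => ?_, fun j => hF _ _⟩
  cases j with
  | zero => exact hPF 0 0
  | succ j => exact hPF (j + 1) (G (k j))

theorem two_mul_sum_range_le {k : ℕ → ℕ} (hk : ∀ j, 3 * k j ≤ k (j + 1)) (j : ℕ) :
    2 * ∑ l ∈ range j, k l ≤ k j := by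
  induction j with
  | zero => simp
  | succ j ih =>
    rw [Finset.sum_range_succ]
    linarith [hk j]

/-! ### Integer-valued step functions on nonoverlapping intervals -/

namespace Nonoverlapping

variable {n : ℕ} {I : Fin n → ℝ × ℝ}

theorem card_filter_ne_le (hI : Nonoverlapping n I) {t : ℝ → ℕ} (ht : Monotone t) {k : ℕ}
    (hk : ∀ x, t x ≤ k) : (Finset.univ.filter fun i => t (I i).1 ≠ t (I i).2).card ≤ k := by
  have hlt : ∀ i, t (I i).1 ≠ t (I i).2 → t (I i).1 < t (I i).2 := fun i =>
    (ht (hI.1 i).2.1.le).lt_of_ne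
  suffices hinj : Set.InjOn (fun i => t (I i).2)
      (Finset.univ.filter fun i => t (I i).1 ≠ t (I i).2) by
    refine (Finset.card_le_card_of_injOn (t := Finset.Icc 1 k) _ (fun i hi => ?_) hinj).trans_eq
      (by simp)
    have := hlt i (by simpa using hi)
    exact Finset.mem_coe.2 (Finset.mem_Icc.2 ⟨by omega, hk _⟩)
  intro i hi j hj hij
  have hi' := hlt i (by simpa using hi)
  have hj' := hlt j (by simpa using hj)
  by_contra hne
  dsimp only at hij
  rcases hI.2 i j hne with h | h
  · have := ht h
    omega
  · have := ht h
    omega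

theorem sum_comp_rpow_div_le (hI : Nonoverlapping n I) (hL : ∀ i, 0 < Lam i)
    (hmono : Monotone Lam) (hp : 0 < p) {t : ℝ → ℕ} (ht : Monotone t) {k : ℕ}
    (hk : ∀ x, t x ≤ k) {φ : ℕ → ℝ} {A : ℝ} (hφ : ∀ a b, |φ a - φ b| ≤ A) :
    ∑ i, |φ (t (I i).2) - φ (t (I i).1)| ^ p / Lam i ≤ A ^ p * recipSum Lam k := by
  have hA : 0 ≤ A := (abs_nonneg _).trans (hφ 0 0)
  calc ∑ i, |φ (t (I i).2) - φ (t (I i).1)| ^ p / Lam i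
      ≤ ∑ i with t (I i).1 ≠ t (I i).2, A ^ p * (1 / Lam i) := by
        rw [Finset.sum_filter]
        refine Finset.sum_le_sum fun i _ => ?_
        split_ifs with h
        · have := hL i
          rw [mul_one_div]
          gcongr
          exact hφ _ _
        · simp [not_not.1 h, Real.zero_rpow hp.ne']
    _ = A ^ p * ∑ i with t (I i).1 ≠ t (I i).2, 1 / Lam i := (Finset.mul_sum ..).symm
    _ ≤ A ^ p * recipSum Lam k := by
        gcongr
        exact sum_one_div_le_recipSum hL hmono (hI.card_filter_ne_le ht hk)

theorem card_le_card_filter_forall_eq_add (hI : Nonoverlapping n I) {t : ℕ → ℝ → ℕ}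
    (ht : ∀ l, Monotone (t l)) {k : ℕ → ℕ} (hk : ∀ l x, t l x ≤ k l) (j : ℕ) :
    n ≤ (Finset.univ.filter fun i => ∀ l < j, t l (I i).1 = t l (I i).2).card +
      ∑ l ∈ range j, k l := by
  classical
  let changing (l : ℕ) : Finset (Fin n) := Finset.univ.filter fun i => t l (I i).1 ≠ t l (I i).2
  have hcompl : (Finset.univ.filter fun i => ¬ ∀ l < j, t l (I i).1 = t l (I i).2) =
      (range j).biUnion changing := by
    ext i
    simp [changing]
  have hchanging : ((range j).biUnion changing).card ≤ ∑ l ∈ range j, k l :=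
    Finset.card_biUnion_le.trans
      (Finset.sum_le_sum fun l _ => hI.card_filter_ne_le (ht l) (hk l))
  have hsplit := Finset.card_filter_add_card_filter_not (s := Finset.univ)
    (fun i : Fin n => ∀ l < j, t l (I i).1 = t l (I i).2)
  rw [hcompl, Finset.card_fin] at hsplit
  omega

end Nonoverlapping

/-! ### Bounds for the two variations -/

theorem pLamVar_lt_top_of_sum_le (hL : ∀ i, 0 < Lam i) (hp : 0 < p) {f : ℝ → ℝ} {C : ℝ}
    (hC : ∀ n I, Nonoverlapping n I → ∑ i, |f (I i).2 - f (I i).1| ^ p / Lam i ≤ C) :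
    pLamVar Lam p f < ⊤ := by
  refine lt_of_le_of_lt ?_ (ENNReal.ofReal_lt_top (r := C ^ (1 / p)))
  refine iSup_le fun n => iSup_le fun I => iSup_le fun hI => ENNReal.ofReal_le_ofReal ?_
  have hnonneg : 0 ≤ ∑ i, |f (I i).2 - f (I i).1| ^ p / Lam i :=
    Finset.sum_nonneg fun i _ => div_nonneg (by positivity) (hL i).le
  exact Real.rpow_le_rpow hnonneg (hC n I hI) (by positivity)

-- A weighted sum is at most the total weight times the supremum, which is below the `ℓᵖ` norm.
theorem abs_tsum_mul_rpow_le {ι : Type*} (hp : 0 < p) {w y : ι → ℝ} (hw₀ : ∀ j, 0 ≤ w j)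
    (hw : Summable w) (hy : Summable fun j => |y j| ^ p) :
    |∑' j, w j * y j| ^ p ≤ (∑' j, w j) ^ p * ∑' j, |y j| ^ p := by
  set S := ∑' j, |y j| ^ p
  have hS : 0 ≤ S := tsum_nonneg fun j => by positivity
  have hW : 0 ≤ ∑' j, w j := tsum_nonneg hw₀
  have hyS : ∀ j, |y j| ≤ S ^ p⁻¹ := fun j =>
    (Real.le_rpow_inv_iff_of_pos (abs_nonneg _) hS hp).2
      (hy.le_tsum j fun l _ => by positivity)
  have hsum : |∑' j, w j * y j| ≤ (∑' j, w j) * S ^ p⁻¹ := by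
    refine tsum_of_norm_bounded (f := fun j => w j * y j) (hw.hasSum.mul_right _) fun j => ?_
    rw [Real.norm_eq_abs, abs_mul, abs_of_nonneg (hw₀ j)]
    exact mul_le_mul_of_nonneg_left (hyS j) (hw₀ j)
  calc |∑' j, w j * y j| ^ p ≤ ((∑' j, w j) * S ^ p⁻¹) ^ p := by gcongr
    _ = (∑' j, w j) ^ p * S := by
      rw [Real.mul_rpow hW (by positivity), Real.rpow_inv_rpow hS hp.ne']

theorem pLamVar_tsum_lt_top {ι : Type*} (hL : ∀ i, 0 < Lam i) (hp : 0 < p) {w v : ι → ℝ}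
    (hw₀ : ∀ j, 0 ≤ w j) (hw : Summable w) (hv : Summable v) {u : ι → ℝ → ℝ}
    (hu : ∀ x, Summable fun j => w j * u j x)
    (huv : ∀ j n I, Nonoverlapping n I →
      ∑ i, |u j (I i).2 - u j (I i).1| ^ p / Lam i ≤ v j) :
    pLamVar Lam p (fun x => ∑' j, w j * u j x) < ⊤ := by
  refine pLamVar_lt_top_of_sum_le hL hp (C := (∑' j, w j) ^ p * ∑' j, v j) fun n I hI => ?_
  have hW : 0 ≤ ∑' j, w j := tsum_nonneg hw₀
  let d (i : Fin n) (j : ι) : ℝ := u j (I i).2 - u j (I i).1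
  have hnonneg : ∀ i j, 0 ≤ |d i j| ^ p / Lam i := fun i j =>
    div_nonneg (by positivity) (hL i).le
  have hdiv : ∀ i, Summable fun j => |d i j| ^ p / Lam i := fun i =>
    hv.of_nonneg_of_le (hnonneg i) fun j =>
      (Finset.single_le_sum (f := fun i => |d i j| ^ p / Lam i) (fun i _ => hnonneg i j)
        (Finset.mem_univ i)).trans (huv j n I hI)
  have hd : ∀ i, Summable fun j => |d i j| ^ p := fun i =>
    (summable_div_const_iff (hL i).ne').1 (hdiv i)
  calc ∑ i, |∑' j, w j * u j (I i).2 - ∑' j, w j * u j (I i).1| ^ p / Lam i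
      = ∑ i, |∑' j, w j * d i j| ^ p / Lam i := by
        simp only [← (hu _).tsum_sub (hu _), ← mul_sub, d]
    _ ≤ ∑ i, (∑' j, w j) ^ p * ∑' j, |d i j| ^ p / Lam i := by
        refine Finset.sum_le_sum fun i _ => ?_
        have := hL i
        rw [tsum_div_const, ← mul_div_assoc]
        gcongr
        exact abs_tsum_mul_rpow_le hp hw₀ hw (hd i)
    _ = (∑' j, w j) ^ p * ∑' j, ∑ i, |d i j| ^ p / Lam i := by
        rw [← Finset.mul_sum, Summable.tsum_finsetSum fun i _ => hdiv i]
    _ ≤ (∑' j, w j) ^ p * ∑' j, v j := by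
        gcongr
        · exact summable_sum fun i _ => hdiv i
        · exact huv _ n I hI

theorem card_rpow_mul_le_wienerVar {f : ℝ → ℝ} {n s : ℕ} (hq : 0 < q n) {I : Fin s → ℝ × ℝ}
    (hI : Nonoverlapping s I) (hδ : ∀ k, 1 / δ n ≤ (I k).2 - (I k).1) {ε : ℝ} (hε : 0 ≤ ε)
    {T : Finset (Fin s)} (hT : ∀ k ∈ T, ε ≤ |f (I k).2 - f (I k).1|) :
    ENNReal.ofReal ((T.card : ℝ) ^ (1 / q n) * ε) ≤ wienerVar q δ f := by
  have hsum : T.card * ε ^ q n ≤ ∑ k, |f (I k).2 - f (I k).1| ^ q n :=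
    calc T.card * ε ^ q n = ∑ _k ∈ T, ε ^ q n := by rw [Finset.sum_const, nsmul_eq_mul]
      _ ≤ ∑ k ∈ T, |f (I k).2 - f (I k).1| ^ q n :=
        Finset.sum_le_sum fun k hk => Real.rpow_le_rpow hε (hT k hk) hq.le
      _ ≤ ∑ k, |f (I k).2 - f (I k).1| ^ q n :=
        Finset.sum_le_univ_sum_of_nonneg fun k => by positivity
  have hroot : (T.card : ℝ) ^ (1 / q n) * ε ≤
      (∑ k, |f (I k).2 - f (I k).1| ^ q n) ^ (1 / q n) :=
    calc (T.card : ℝ) ^ (1 / q n) * ε = (T.card * ε ^ q n) ^ (1 / q n) := by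
          rw [Real.mul_rpow (by positivity) (by positivity), one_div, Real.rpow_rpow_inv hε hq.ne']
      _ ≤ _ := by gcongr
  refine (ENNReal.ofReal_le_ofReal hroot).trans ?_
  exact le_iSup_of_le n (le_iSup_of_le s (le_iSup_of_le I (le_iSup_of_le hI
    (le_iSup_of_le hδ le_rfl))))

theorem mul_abs_le_abs_tsum_of_geometric {e : ℕ → ℝ} {r : ℝ} (hr₀ : 0 ≤ r) (hr : r < 1) {j : ℕ}
    (hzero : ∀ l < j, e l = 0) (hgeom : ∀ m, |e (j + m)| ≤ r ^ m * |e j|) :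
    (1 - r / (1 - r)) * |e j| ≤ |∑' l, e l| := by
  have htail : HasSum (fun m => r ^ (m + 1) * |e j|) (r / (1 - r) * |e j|) := by
    simpa only [pow_succ', div_eq_mul_inv] using
      ((hasSum_geometric_of_lt_one hr₀ hr).mul_left r).mul_right |e j|
  have hbound : ∀ m, ‖e (m + (j + 1))‖ ≤ r ^ (m + 1) * |e j| := fun m => by
    simpa only [Real.norm_eq_abs, add_comm, add_left_comm] using hgeom (m + 1)
  have hsummable : Summable e :=
    (summable_nat_add_iff (j + 1)).1 (.of_norm_bounded htail.summable hbound)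
  have hsplit : ∑' l, e l = e j + ∑' m, e (m + (j + 1)) := by
    rw [← hsummable.sum_add_tsum_nat_add (j + 1), Finset.sum_range_succ,
      Finset.sum_eq_zero fun l hl => hzero l (Finset.mem_range.1 hl), zero_add]
  have hrest : |∑' m, e (m + (j + 1))| ≤ r / (1 - r) * |e j| := tsum_of_norm_bounded htail hbound
  have htriangle := abs_sub_abs_le_abs_add (e j) (∑' m, e (m + (j + 1)))
  rw [hsplit]
  linarith

/-! ### Square waves -/

/-- The number of points among `1 / D, 2 / D, …, k / D` which are at most `x`. -/
noncomputable def gridCount (D : ℝ) (k : ℕ) (x : ℝ) : ℕ :=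
  min ⌊x * D⌋₊ k

/-- The step function which alternates between `0` and `1`, switching at the points
`1 / D, 2 / D, …, k / D`. -/
noncomputable def squareWave (D : ℝ) (k : ℕ) (x : ℝ) : ℝ :=
  (gridCount D k x % 2 : ℕ)

/-- The `i`-th cell `[i / D, (i + 1) / D]` of the grid of mesh `1 / D`, for `i < k`. -/
noncomputable def gridCell (D : ℝ) (k : ℕ) (i : Fin k) : ℝ × ℝ :=
  ((i : ℕ) / D, ((i : ℕ) + 1 : ℕ) / D)

section Grid

variable {D : ℝ} {k : ℕ}

theorem gridCount_mono (hD : 0 ≤ D) : Monotone (gridCount D k) := fun _ _ hxy =>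
  min_le_min_right _ (Nat.floor_mono (mul_le_mul_of_nonneg_right hxy hD))

theorem gridCount_le (D : ℝ) (k : ℕ) (x : ℝ) : gridCount D k x ≤ k :=
  min_le_right _ _

theorem gridCount_natCast_div (hD : D ≠ 0) {i : ℕ} (hi : i ≤ k) : gridCount D k (i / D) = i := by
  rw [gridCount, div_mul_cancel₀ _ hD, Nat.floor_natCast, min_eq_left hi]

theorem abs_natCast_mod_two_sub_le (a b : ℕ) : |((a % 2 : ℕ) : ℝ) - (b % 2 : ℕ)| ≤ 1 := by
  rcases Nat.mod_two_eq_zero_or_one a with ha | ha <;>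
    rcases Nat.mod_two_eq_zero_or_one b with hb | hb <;> simp [ha, hb]

theorem abs_squareWave_le_one (D : ℝ) (k : ℕ) (x : ℝ) : |squareWave D k x| ≤ 1 := by
  simpa [squareWave] using abs_natCast_mod_two_sub_le (gridCount D k x) 0

theorem abs_squareWave_sub_le_one (D : ℝ) (k : ℕ) (x y : ℝ) :
    |squareWave D k x - squareWave D k y| ≤ 1 :=
  abs_natCast_mod_two_sub_le _ _

theorem abs_squareWave_sub_gridCell (hD : D ≠ 0) (i : Fin k) :
    |squareWave D k (gridCell D k i).2 - squareWave D k (gridCell D k i).1| = 1 := by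
  rw [squareWave, squareWave, gridCell, gridCount_natCast_div hD i.2,
    gridCount_natCast_div hD i.2.le]
  rcases Nat.mod_two_eq_zero_or_one i with h | h
  · simp [h, Nat.succ_mod_two_eq_one_iff.2 h]
  · simp [h, Nat.succ_mod_two_eq_zero_iff.2 h]

theorem gridCell_snd_sub_fst (D : ℝ) (i : Fin k) :
    (gridCell D k i).2 - (gridCell D k i).1 = 1 / D := by
  rw [gridCell, ← sub_div, Nat.cast_succ, add_sub_cancel_left]

theorem nonoverlapping_gridCell (hD : 0 < D) (hk : (k : ℝ) ≤ D) :
    Nonoverlapping k (gridCell D k) := by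
  have hle : ∀ i j : Fin k, i < j → (gridCell D k i).2 ≤ (gridCell D k j).1 := fun i j hij =>
    div_le_div_of_nonneg_right (Nat.cast_le.2 (Nat.succ_le_of_lt hij)) hD.le
  refine ⟨fun i => ⟨by simp only [gridCell]; positivity, ?_, ?_⟩,
    fun i j hij => (lt_or_gt_of_ne hij).imp (hle i j) (hle j i)⟩
  · rw [← sub_pos, gridCell_snd_sub_fst]
    positivity
  · exact (div_le_one hD).2 ((Nat.cast_le.2 i.2).trans hk)

theorem sum_abs_mul_squareWave_sub_rpow_div_le (hL : ∀ i, 0 < Lam i) (hmono : Monotone Lam)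
    (hp : 0 < p) (hD : 0 ≤ D) (b : ℝ) {n : ℕ} {I : Fin n → ℝ × ℝ} (hI : Nonoverlapping n I) :
    ∑ i, |b * squareWave D k (I i).2 - b * squareWave D k (I i).1| ^ p / Lam i ≤
      |b| ^ p * recipSum Lam k := by
  refine hI.sum_comp_rpow_div_le hL hmono hp (gridCount_mono hD) (gridCount_le D k)
    (φ := fun m => b * (m % 2 : ℕ)) fun m m' => ?_
  rw [← mul_sub, abs_mul]
  exact mul_le_of_le_one_right (abs_nonneg b) (abs_natCast_mod_two_sub_le m m')

end Grid

/-! ### Superposition of square waves -/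

/-- The function `∑ 4⁻ʲ a_j u_j`, where `u_j` is the square wave with `k j` switches at distance
`1 / D j`. The factor `4⁻ʲ` makes each term dominate the sum of its successors. -/
noncomputable def waveSum (D : ℕ → ℝ) (k : ℕ → ℕ) (a : ℕ → ℝ) (x : ℝ) : ℝ :=
  ∑' j, (1 / 4) ^ j * (a j * squareWave (D j) (k j) x)

section WaveSum

variable {D : ℕ → ℝ} {k : ℕ → ℕ} {a : ℕ → ℝ}

theorem summable_waveSum (ha₀ : ∀ j, 0 ≤ a j) (ha : Antitone a) (x : ℝ) :
    Summable fun j => (1 / 4 : ℝ) ^ j * (a j * squareWave (D j) (k j) x) := by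
  have hgeom : Summable fun j : ℕ => (1 / 4 : ℝ) ^ j * a 0 :=
    (summable_geometric_of_lt_one (by norm_num) (by norm_num)).mul_right _
  refine hgeom.of_norm_bounded fun j => ?_
  rw [Real.norm_eq_abs, abs_mul, abs_mul, abs_of_nonneg (ha₀ j), abs_of_nonneg (by positivity)]
  gcongr
  exact (mul_le_of_le_one_right (ha₀ j) (abs_squareWave_le_one _ _ x)).trans (ha j.zero_le)

theorem pLamVar_waveSum_lt_top (hL : ∀ i, 0 < Lam i) (hmono : Monotone Lam) (hp : 0 < p)
    (hD : ∀ j, 0 ≤ D j) (ha₀ : ∀ j, 0 ≤ a j) (ha : Antitone a)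
    (hak : ∀ j, a j ^ p * recipSum Lam (k j) ≤ 1) : pLamVar Lam p (waveSum D k a) < ⊤ := by
  have hsplit : ∀ j x, (1 / 4 : ℝ) ^ j * (a j * squareWave (D j) (k j) x) =
      (1 / 2) ^ j * ((1 / 2) ^ j * a j * squareWave (D j) (k j) x) := fun j x => by
    rw [show (1 / 4 : ℝ) = 1 / 2 * (1 / 2) by norm_num, mul_pow]
    ring
  have hv : Summable fun j : ℕ => ((1 / 2 : ℝ) ^ p) ^ j :=
    summable_geometric_of_lt_one (by positivity)
      (Real.rpow_lt_one (by norm_num) (by norm_num) hp)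
  have hsummable := summable_waveSum (D := D) (k := k) ha₀ ha
  unfold waveSum
  simp only [hsplit] at hsummable ⊢
  refine pLamVar_tsum_lt_top hL hp (fun j => by positivity) summable_geometric_two hv hsummable
    fun j n I hI => (sum_abs_mul_squareWave_sub_rpow_div_le hL hmono hp (hD j) _ hI).trans ?_
  calc |(1 / 2) ^ j * a j| ^ p * recipSum Lam (k j)
      = ((1 / 2 : ℝ) ^ p) ^ j * (a j ^ p * recipSum Lam (k j)) := by
        rw [abs_of_nonneg (mul_nonneg (by positivity) (ha₀ j)),
          Real.mul_rpow (by positivity) (ha₀ j), Real.rpow_pow_comm (by norm_num), mul_assoc]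
    _ ≤ ((1 / 2 : ℝ) ^ p) ^ j := mul_le_of_le_one_right (by positivity) (hak j)

theorem le_abs_waveSum_sub_gridCell (ha₀ : ∀ j, 0 ≤ a j) (ha : Antitone a) {j : ℕ}
    (hD : D j ≠ 0) {i : Fin (k j)}
    (hi : ∀ l < j, gridCount (D l) (k l) (gridCell (D j) (k j) i).1 =
      gridCount (D l) (k l) (gridCell (D j) (k j) i).2) :
    2 / 3 * ((1 / 4) ^ j * a j) ≤ |waveSum D k a (gridCell (D j) (k j) i).2 -
      waveSum D k a (gridCell (D j) (k j) i).1| := by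
  set x := (gridCell (D j) (k j) i).1
  set y := (gridCell (D j) (k j) i).2
  let e (l : ℕ) : ℝ :=
    (1 / 4) ^ l * (a l * (squareWave (D l) (k l) y - squareWave (D l) (k l) x))
  have habs : ∀ l, |e l| = (1 / 4) ^ l *
      (a l * |squareWave (D l) (k l) y - squareWave (D l) (k l) x|) := fun l => by
    rw [abs_mul, abs_mul, abs_of_nonneg (ha₀ l), abs_of_nonneg (by positivity)]
  have hj : |e j| = (1 / 4) ^ j * a j := by
    rw [habs, abs_squareWave_sub_gridCell hD, mul_one]
  have hzero : ∀ l < j, e l = 0 := fun l hl => by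
    simp only [e, squareWave, hi l hl, sub_self, mul_zero]
  have hgeom : ∀ m, |e (j + m)| ≤ (1 / 4) ^ m * |e j| := fun m => by
    rw [habs, hj, pow_add, mul_comm ((1 / 4 : ℝ) ^ j), mul_assoc]
    gcongr
    exact (mul_le_of_le_one_right (ha₀ _) (abs_squareWave_sub_le_one _ _ y x)).trans
      (ha (j.le_add_right m))
  have hdiff : waveSum D k a y - waveSum D k a x = ∑' l, e l := by
    simp only [waveSum, e, mul_sub,
      ← (summable_waveSum ha₀ ha y).tsum_sub (summable_waveSum ha₀ ha x)]
  calc 2 / 3 * ((1 / 4) ^ j * a j) = (1 - 1 / 4 / (1 - 1 / 4)) * |e j| := by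
        rw [hj]
        norm_num
    _ ≤ |waveSum D k a y - waveSum D k a x| := hdiff ▸
        mul_abs_le_abs_tsum_of_geometric (by norm_num) (by norm_num) hzero hgeom

theorem ofReal_le_wienerVar_waveSum (ha₀ : ∀ j, 0 ≤ a j) (ha : Antitone a) (hD : ∀ j, 0 < D j)
    (hk : ∀ j, 3 * k j ≤ k (j + 1)) {j n : ℕ} (hq : 0 < q n) (hδ : δ n = D j)
    (hkD : (k j : ℝ) ≤ D j) :
    ENNReal.ofReal ((k j / 2 : ℝ) ^ (1 / q n) * (2 / 3 * ((1 / 4) ^ j * a j))) ≤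
      wienerVar q δ (waveSum D k a) := by
  let I := gridCell (D j) (k j)
  let T : Finset (Fin (k j)) := Finset.univ.filter fun i =>
    ∀ l < j, gridCount (D l) (k l) (I i).1 = gridCount (D l) (k l) (I i).2
  have hI : Nonoverlapping (k j) I := nonoverlapping_gridCell (hD j) hkD
  have hTcard : (k j / 2 : ℝ) ≤ T.card := by
    have hcount : k j ≤ T.card + ∑ l ∈ range j, k l := hI.card_le_card_filter_forall_eq_add
      (fun l => gridCount_mono (k := k l) (hD l).le) (fun l => gridCount_le (D l) (k l)) j
    have hgrowth := two_mul_sum_range_le hk j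
    have hle : k j ≤ T.card * 2 := by omega
    rw [div_le_iff₀ two_pos]
    exact_mod_cast hle
  have hε : 0 ≤ 2 / 3 * ((1 / 4) ^ j * a j) := by
    have := ha₀ j
    positivity
  have hT : ∀ i ∈ T, 2 / 3 * ((1 / 4) ^ j * a j) ≤
      |waveSum D k a (I i).2 - waveSum D k a (I i).1| := fun i hi =>
    le_abs_waveSum_sub_gridCell ha₀ ha (hD j).ne' (Finset.mem_filter.1 hi).2
  have hlength : ∀ i, 1 / δ n ≤ (I i).2 - (I i).1 := fun i =>
    (congrArg (1 / ·) hδ).trans_le (gridCell_snd_sub_fst (D j) i).ge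
  refine le_trans (ENNReal.ofReal_le_ofReal ?_) (card_rpow_mul_le_wienerVar hq hI hlength hε hT)
  gcongr

theorem wienerVar_waveSum_eq_top {c : ℝ} (hc : 0 < c) (hq : ∀ n, c ≤ q n) (ha₀ : ∀ j, 0 ≤ a j)
    (ha : Antitone a) (hk : ∀ j, 3 * k j ≤ k (j + 1)) {N : ℕ → ℕ} (hδ : ∀ j, 0 < δ (N j))
    (hkδ : ∀ j, (k j : ℝ) ≤ δ (N j)) (hka : ∀ j, 8 ^ j ≤ (k j : ℝ) ^ (1 / q (N j)) * a j) :
    wienerVar q δ (waveSum (fun j => δ (N j)) k a) = ⊤ := by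
  have hlower : ∀ j, (1 / 2 : ℝ) ^ (1 / c) * (2 / 3) * 2 ^ j ≤
      (k j / 2 : ℝ) ^ (1 / q (N j)) * (2 / 3 * ((1 / 4) ^ j * a j)) := fun j =>
    calc (1 / 2 : ℝ) ^ (1 / c) * (2 / 3) * 2 ^ j
        = (1 / 2) ^ (1 / c) * (2 / 3) * ((1 / 4) ^ j * 8 ^ j) := by
          rw [← mul_pow]
          norm_num
      _ ≤ (1 / 2) ^ (1 / q (N j)) * (2 / 3) *
            ((1 / 4) ^ j * ((k j : ℝ) ^ (1 / q (N j)) * a j)) := by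
          have hexp : 1 / q (N j) ≤ 1 / c := one_div_le_one_div_of_le hc (hq _)
          have hhalf : (1 / 2 : ℝ) ^ (1 / c) ≤ (1 / 2) ^ (1 / q (N j)) :=
            Real.rpow_le_rpow_of_exponent_ge (by norm_num) (by norm_num) hexp
          gcongr
          exact hka j
      _ = (k j / 2 : ℝ) ^ (1 / q (N j)) * (2 / 3 * ((1 / 4) ^ j * a j)) := by
          rw [div_eq_mul_one_div (k j : ℝ) 2, Real.mul_rpow (by positivity) (by positivity)]
          ring
  have hlim : Tendsto (fun j : ℕ => ENNReal.ofReal ((1 / 2 : ℝ) ^ (1 / c) * (2 / 3) * 2 ^ j))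
      atTop (nhds ⊤) :=
    ENNReal.tendsto_ofReal_atTop.comp
      ((tendsto_pow_atTop_atTop_of_one_lt one_lt_two).const_mul_atTop (by positivity))
  exact top_le_iff.1 (le_of_tendsto' hlim fun j => (ENNReal.ofReal_le_ofReal (hlower j)).trans
    (ofReal_le_wienerVar_waveSum ha₀ ha hδ hk (hc.trans_le (hq _)) rfl (hkδ j)))

end WaveSum

theorem necessity_general (hLpos : ∀ i, 0 < Lam i) (hLmono : Monotone Lam) (hp : 0 < p) {c : ℝ}
    (hc : 0 < c) (hq : ∀ n, c ≤ q n)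
    (h : limsup (fun n => ⨆ (k : ℕ) (_ : 1 ≤ k) (_ : (k : ℝ) ≤ δ n),
      ENNReal.ofReal ((k : ℝ) ^ (1 / q n) /
        (∑ i ∈ range k, 1 / Lam i) ^ (1 / p))) atTop = ⊤) :
    ∃ g : ℝ → ℝ, pLamVar Lam p g < ⊤ ∧ ¬ wienerVar q δ g < ⊤ := by
  obtain ⟨k, hP, hgrowth⟩ := exists_seq_of_frequently
    (fun j => frequently_exists_le_of_limsup_eq_top hLpos hp hc hq h (8 ^ j)) (3 * ·)
  choose hk N hkδ hratio using hP
  let a (j : ℕ) : ℝ := (recipSum Lam (k j) ^ (1 / p))⁻¹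
  have hδ (j : ℕ) : 0 < δ (N j) := (Nat.cast_pos.2 (hk j)).trans_le (hkδ j)
  have hkmono : Monotone k := monotone_nat_of_le_succ fun j => by linarith [hgrowth j]
  have hS (j : ℕ) : 0 < recipSum Lam (k j) := recipSum_pos hLpos (hk j)
  have ha₀ (j : ℕ) : 0 ≤ a j := inv_nonneg.2 (Real.rpow_nonneg (hS j).le _)
  have ha : Antitone a := fun i j hij => inv_anti₀ (Real.rpow_pos_of_pos (hS i) _)
    (Real.rpow_le_rpow (hS i).le (recipSum_mono hLpos (hkmono hij)) (by positivity))
  have hak (j : ℕ) : a j ^ p * recipSum Lam (k j) = 1 := by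
    rw [Real.inv_rpow (Real.rpow_nonneg (hS j).le _), one_div,
      Real.rpow_inv_rpow (hS j).le hp.ne', inv_mul_cancel₀ (hS j).ne']
  refine ⟨waveSum (fun j => δ (N j)) k a, ?_, ?_⟩
  · exact pLamVar_waveSum_lt_top hLpos hLmono hp (fun j => (hδ j).le) ha₀ ha fun j => (hak j).le
  · rw [wienerVar_waveSum_eq_top hc hq ha₀ ha hgrowth hδ hkδ hratio]
    exact lt_irrefl ⊤

/-- **Necessity.** If `limsup_{n→∞} max_{1 ≤ k ≤ δ(n)} k^{1/q(n)} / (∑_{i=1}^k 1/λ_i)^{1/p}`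
is infinite, then there is a function `g` of bounded `p`-`Λ`-variation which does not belong
to `BV(q;δ)`; the inclusion `ΛBV^(p) ⊆ BV(q;δ)` fails. -/
theorem necessity
    (Lam q δ : ℕ → ℝ) (p : ℝ)
    (hLpos : ∀ i, 0 < Lam i) (hLmono : Monotone Lam)
    (hLdiv : Tendsto (fun n => ∑ i ∈ Finset.range n, 1 / Lam i) atTop atTop)
    (hp : 1 ≤ p)
    (hqpos : ∀ n, 0 < q n) (hq : StrictMono q)
    (hδpos : ∀ n, 0 < δ n) (hδ : StrictMono δ)
    (hδunbdd : Tendsto δ atTop atTop)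
    (h : Filter.limsup (fun n =>
        ⨆ (k : ℕ) (_ : 1 ≤ k) (_ : (k : ℝ) ≤ δ n),
          ENNReal.ofReal ((k : ℝ) ^ (1 / q n) /
            (∑ i ∈ Finset.range k, 1 / Lam i) ^ (1 / p))) atTop = ⊤) :
    ∃ g : ℝ → ℝ, pLamVar Lam p g < ⊤ ∧ ¬ wienerVar q δ g < ⊤ :=
  necessity_general hLpos hLmono (one_pos.trans_le hp) (hqpos 0) (fun n => hq.monotone n.zero_le) h
end
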